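/- Let m ≥ 2 be an integer, 0 < β < 1/2, and p = β/(1-β). For x ∈ T_m with x ≠ ∅ and t ∈ I_{x^{-(|x|-1)}}, define n(x,t) := max{n ∈ {1,...,|x|} : t ∈ I_{x^{-(|x|-n)}}}, and for j ∈ {0,...,m-1} define the kernel K_m^j(x,t) = p^{|x|} − (m(1−p)/(m−p))·(p^{|x|} − m^{|x|}) − m^{|x|+1} if t ∈ I_{(x,j)}, and K_m^j(x,t) = p^{|x|}·(1 − (m(1−p)/(m−p))·(1 − (p/m)^{−n(x,t)})·χ_{I_{x^{-(|x|-1)}}}(t)) if t ∉ I_{(x,j)}. Then for every x ≠ ∅ and every j ∈ {0,...,m-1}, ∫_0^1 K_m^j(x,t) dt = 0. -/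

import Mathlib

open MeasureTheory Filter

noncomputable def psiV (m : ℕ) (x : List (Fin m)) : ℝ :=
  ∑ i : Fin x.length, ((x.get i : ℕ) : ℝ) * ((m : ℝ) ^ (i.1 + 1))⁻¹

noncomputable def psiB (m : ℕ) (π : ℕ → Fin m) : ℝ :=
  ∑' k : ℕ, ((π k : ℕ) : ℝ) * ((m : ℝ) ^ (k + 1))⁻¹

def trunc (m : ℕ) (π : ℕ → Fin m) (k : ℕ) : List (Fin m) :=
  List.ofFn (fun i : Fin k => π i)

noncomputable def Ix (m : ℕ) (x : List (Fin m)) : Set ℝ :=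
  Set.Icc (psiV m x) (psiV m x + ((m : ℝ) ^ x.length)⁻¹)

def BHarmonic (m : ℕ) (β : ℝ) (u : List (Fin m) → ℝ) : Prop :=
  u [] = (1 / (m : ℝ)) * ∑ j : Fin m, u [j] ∧
  ∀ x : List (Fin m), x ≠ [] →
    u x = β * u x.dropLast + ((1 - β) / (m : ℝ)) * ∑ i : Fin m, u (x ++ [i])

def BoundaryDatum (m : ℕ) (u : List (Fin m) → ℝ) (g : ℝ → ℝ) : Prop :=
  ∀ π : ℕ → Fin m,
    Tendsto (fun k => u (trunc m π k)) atTop (nhds (g (psiB m π)))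

def BoundedFun (m : ℕ) (u : List (Fin m) → ℝ) : Prop :=
  ∃ C : ℝ, ∀ x : List (Fin m), |u x| ≤ C


noncomputable def nfun (m : ℕ) (x : List (Fin m)) (t : ℝ) : ℕ :=
  sSup {n : ℕ | 1 ≤ n ∧ n ≤ x.length ∧ t ∈ Ix m (x.take n)}

open Classical in
noncomputable def Kker (m : ℕ) (p : ℝ) (x : List (Fin m)) (j : Fin m) (t : ℝ) : ℝ :=
  if t ∈ Ix m (x ++ [j]) then
    p ^ x.length - ((m : ℝ) * (1 - p) / (m - p)) * (p ^ x.length - (m : ℝ) ^ x.length)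
      - (m : ℝ) ^ (x.length + 1)
  else
    p ^ x.length * (1 - ((m : ℝ) * (1 - p) / (m - p)) *
      (1 - (p / m) ^ (-(nfun m x t : ℤ))) *
      Set.indicator (Ix m (x.take 1)) (fun _ => (1 : ℝ)) t)

lemma psiV_eq (m : ℕ) (x : List (Fin m)) :
    psiV m x = ∑ i ∈ Finset.range x.length,
      (((x[i]?.map (fun a : Fin m => (a : ℕ))).getD 0 : ℕ) : ℝ) * ((m : ℝ) ^ (i + 1))⁻¹ := by
  rw [Finset.sum_range]
  unfold psiV
  refine Finset.sum_congr rfl fun i _ => ?_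
  simp

lemma psiV_append (m : ℕ) (x : List (Fin m)) (j : Fin m) :
    psiV m (x ++ [j]) = psiV m x + ((j : ℕ) : ℝ) * ((m : ℝ) ^ (x.length + 1))⁻¹ := by
  rw [psiV_eq, psiV_eq, List.length_append, List.length_singleton, Finset.sum_range_succ]
  congr 1
  · refine Finset.sum_congr rfl fun i hi => ?_
    rw [Finset.mem_range] at hi
    rw [List.getElem?_append_left hi]
  · simp

lemma Ix_append_subset (m : ℕ) (hm : 2 ≤ m) (x : List (Fin m)) (j : Fin m) :
    Ix m (x ++ [j]) ⊆ Ix m x := by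
  have hm0 : (0 : ℝ) < m := by positivity
  have hj : ((j : ℕ) : ℝ) + 1 ≤ m := by exact_mod_cast j.2
  unfold Ix
  rw [psiV_append, List.length_append, List.length_singleton]
  have h1 : ((m : ℝ) ^ x.length)⁻¹ = m * ((m : ℝ) ^ (x.length + 1))⁻¹ := by
    rw [pow_succ]
    field_simp
  have h2 : 0 < ((m : ℝ) ^ (x.length + 1))⁻¹ := by positivity
  apply Set.Icc_subset_Icc
  · have : 0 ≤ ((j : ℕ) : ℝ) * ((m : ℝ) ^ (x.length + 1))⁻¹ := by positivity
    linarith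
  · rw [h1]
    nlinarith

lemma Ix_take_antitone (m : ℕ) (hm : 2 ≤ m) (x : List (Fin m)) :
    Antitone (fun k => Ix m (x.take k)) := by
  refine antitone_nat_of_succ_le fun k => ?_
  by_cases hk : k < x.length
  · rw [List.take_succ_eq_append_getElem hk]
    exact Ix_append_subset m hm _ _
  · rw [List.take_of_length_le (by omega), List.take_of_length_le (by omega)]

lemma Ix_subset_unit (m : ℕ) (hm : 2 ≤ m) (x : List (Fin m)) :
    Ix m x ⊆ Set.Icc 0 1 := by
  have h := Ix_take_antitone m hm x (Nat.zero_le x.length)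
  have e : Ix m ([] : List (Fin m)) = Set.Icc 0 1 := by
    simp [Ix, psiV_eq]
  simp only [List.take_length, List.take_zero, e] at h
  exact h

lemma ker_sum (m : ℕ) (hm : 2 ≤ m) (r : ℝ) (x : List (Fin m)) (t : ℝ) :
    (1 - r ^ (nfun m x t)) * Set.indicator (Ix m (x.take 1)) (fun _ => (1 : ℝ)) t =
      ∑ k ∈ Finset.range x.length,
        (r ^ k - r ^ (k + 1)) * Set.indicator (Ix m (x.take (k + 1))) (fun _ => (1 : ℝ)) t := by
  classical
  by_cases h1 : t ∈ Ix m (x.take 1)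
  · by_cases hx : x.length = 0
    · have : nfun m x t = 0 := by
        unfold nfun
        have : {n : ℕ | 1 ≤ n ∧ n ≤ x.length ∧ t ∈ Ix m (x.take n)} = ∅ := by
          ext n
          simp only [Set.mem_setOf_eq, Set.mem_empty_iff_false, iff_false]
          omega
        rw [this]
        simp
      simp [this, hx]
    have hbdd : BddAbove {n : ℕ | 1 ≤ n ∧ n ≤ x.length ∧ t ∈ Ix m (x.take n)} :=
      ⟨x.length, fun n hn => hn.2.1⟩
    have hmem : nfun m x t ∈ {n : ℕ | 1 ≤ n ∧ n ≤ x.length ∧ t ∈ Ix m (x.take n)} :=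
      Nat.sSup_mem ⟨1, le_refl _, by omega, h1⟩ hbdd
    obtain ⟨hn1, hn2, hn3⟩ := hmem
    rw [Set.indicator_of_mem h1, mul_one]
    have hs : Finset.range (nfun m x t) ⊆ Finset.range x.length := by
      intro a; simp only [Finset.mem_range]; omega
    rw [← Finset.sum_subset hs]
    · have e : ∑ k ∈ Finset.range (nfun m x t), (r ^ k - r ^ (k + 1)) *
          Set.indicator (Ix m (x.take (k + 1))) (fun _ => (1 : ℝ)) t =
          ∑ k ∈ Finset.range (nfun m x t), (r ^ k - r ^ (k + 1)) := by
        refine Finset.sum_congr rfl fun k hk => ?_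
        rw [Finset.mem_range] at hk
        rw [Set.indicator_of_mem, mul_one]
        exact Ix_take_antitone m hm x (show k + 1 ≤ nfun m x t by omega) hn3
      rw [e, Finset.sum_range_sub']
      simp
    · intro k hk hk'
      rw [Finset.mem_range] at hk hk'
      rw [Set.indicator_of_notMem, mul_zero]
      intro hc
      have : k + 1 ≤ nfun m x t := le_csSup hbdd ⟨by omega, by omega, hc⟩
      omega
  · rw [Set.indicator_of_notMem h1, mul_zero]
    symm
    refine Finset.sum_eq_zero fun k _ => ?_
    rw [Set.indicator_of_notMem, mul_zero]
    intro hc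
    exact h1 (Ix_take_antitone m hm x (show 1 ≤ k + 1 by omega) hc)

lemma Kker_eq (m : ℕ) (hm : 2 ≤ m) (p : ℝ) (hp : 0 < p) (x : List (Fin m)) (hx : x ≠ [])
    (j : Fin m) (t : ℝ) :
    Kker m p x j t = p ^ x.length * (1 - ((m : ℝ) * (1 - p) / (m - p)) *
      ∑ k ∈ Finset.range x.length, (((m : ℝ) / p) ^ k - ((m : ℝ) / p) ^ (k + 1)) *
        Set.indicator (Ix m (x.take (k + 1))) (fun _ => (1 : ℝ)) t)
      - (m : ℝ) ^ (x.length + 1) * Set.indicator (Ix m (x ++ [j])) (fun _ => (1 : ℝ)) t := by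
  have hm0 : (0 : ℝ) < m := by positivity
  have hl : 0 < x.length := List.length_pos_iff.mpr hx
  rw [← ker_sum m hm]
  have hr : (p / m) ^ (-(nfun m x t : ℤ)) = ((m : ℝ) / p) ^ nfun m x t := by
    rw [zpow_neg, zpow_natCast, ← inv_pow, inv_div]
  unfold Kker
  rw [hr]
  split_ifs with h
  · have hxN : t ∈ Ix m x := Ix_append_subset m hm x j h
    have h1 : t ∈ Ix m (x.take 1) := by
      apply Ix_take_antitone m hm x (show 1 ≤ x.length by omega)
      simpa using hxN
    have hn : nfun m x t = x.length := by
      unfold nfun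
      apply IsGreatest.csSup_eq
      exact ⟨⟨hl, le_refl _, by simpa using hxN⟩, fun n hn => hn.2.1⟩
    rw [Set.indicator_of_mem h, Set.indicator_of_mem h1, hn, div_pow]
    have : p ^ x.length ≠ 0 := by positivity
    field_simp
  · rw [Set.indicator_of_notMem h]
    ring

lemma Ix_meas (m : ℕ) (x : List (Fin m)) : MeasurableSet (Ix m x) := measurableSet_Icc

lemma ind_int (m : ℕ) (x : List (Fin m)) :
    IntervalIntegrable (Set.indicator (Ix m x) (fun _ => (1 : ℝ))) volume 0 1 := by
  rw [intervalIntegrable_iff]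
  exact (integrableOn_const (by simp)).indicator (Ix_meas m x)

lemma ind_val (m : ℕ) (hm : 2 ≤ m) (x : List (Fin m)) :
    ∫ t in (0:ℝ)..1, Set.indicator (Ix m x) (fun _ => (1 : ℝ)) t = ((m : ℝ) ^ x.length)⁻¹ := by
  have hm0 : (0 : ℝ) < m := by positivity
  rw [intervalIntegral.integral_of_le zero_le_one, ← integral_Icc_eq_integral_Ioc,
    setIntegral_indicator (Ix_meas m x), Set.inter_eq_right.mpr (Ix_subset_unit m hm x)]
  have : 0 ≤ ((m : ℝ) ^ x.length)⁻¹ := by positivity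
  simp [Ix, Measure.real]

theorem stmt12 (m : ℕ) (hm : 2 ≤ m) (β : ℝ) (hβ0 : 0 < β) (hβ1 : β < 1 / 2)
    (p : ℝ) (hp : p = β / (1 - β)) :
    ∀ x : List (Fin m), x ≠ [] → ∀ j : Fin m,
      ∫ t in (0:ℝ)..1, Kker m p x j t = 0 := by
  intro x hx j
  have hm2 : (2 : ℝ) ≤ m := by exact_mod_cast hm
  have hm0 : (0 : ℝ) < m := by positivity
  have hp0 : 0 < p := by rw [hp]; apply div_pos <;> linarith
  have hp1 : p < 1 := by rw [hp, div_lt_one] <;> linarith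
  simp_rw [Kker_eq m hm p hp0 x hx j]
  have hsI : IntervalIntegrable (fun t => ∑ k ∈ Finset.range x.length,
      (((m : ℝ) / p) ^ k - ((m : ℝ) / p) ^ (k + 1)) *
        Set.indicator (Ix m (x.take (k + 1))) (fun _ => (1 : ℝ)) t) volume 0 1 := by
    have := IntervalIntegrable.sum (μ := volume) (a := 0) (b := 1) (Finset.range x.length)
      (f := fun k t => (((m : ℝ) / p) ^ k - ((m : ℝ) / p) ^ (k + 1)) *
        Set.indicator (Ix m (x.take (k + 1))) (fun _ => (1 : ℝ)) t)
      (fun k _ => (ind_int m _).const_mul _)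
    have e := Finset.sum_fn (Finset.range x.length)
      (fun k t => (((m : ℝ) / p) ^ k - ((m : ℝ) / p) ^ (k + 1)) *
        Set.indicator (Ix m (x.take (k + 1))) (fun _ => (1 : ℝ)) t)
    rw [← e]
    exact this
  rw [intervalIntegral.integral_sub
    (((intervalIntegrable_const).sub (hsI.const_mul _)).const_mul _) ((ind_int m _).const_mul _),
    intervalIntegral.integral_const_mul, intervalIntegral.integral_const_mul,
    intervalIntegral.integral_sub intervalIntegrable_const (hsI.const_mul _),
    intervalIntegral.integral_const_mul,
    intervalIntegral.integral_finsetSum (fun k _ => (ind_int m _).const_mul _), ind_val m hm]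
  have hs : ∀ N, N ≤ x.length → ∑ k ∈ Finset.range N, ∫ t in (0:ℝ)..1,
      (((m : ℝ) / p) ^ k - ((m : ℝ) / p) ^ (k + 1)) *
        Set.indicator (Ix m (x.take (k + 1))) (fun _ => (1 : ℝ)) t
      = (p - m) / (m * (1 - p)) * ((p ^ N)⁻¹ - 1) := by
    intro N
    induction N with
    | zero => simp
    | succ N ih =>
      intro hN
      rw [Finset.sum_range_succ, ih (by omega), intervalIntegral.integral_const_mul,
        ind_val m hm, List.length_take, min_eq_left hN]
      have : 1 - p ≠ 0 := by linarith
      rw [div_pow, div_pow]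
      field_simp
      ring
  rw [hs _ le_rfl]
  have h1 : 1 - p ≠ 0 := by linarith
  have h2 : (m : ℝ) - p ≠ 0 := by linarith
  have h3 : (m : ℝ) * (1 - p) / (m - p) * ((p - m) / (m * (1 - p)) * ((p ^ x.length)⁻¹ - 1))
      = 1 - (p ^ x.length)⁻¹ := by
    field_simp
    ring
  rw [h3]
  simp only [List.length_append, List.length_singleton, intervalIntegral.integral_const]
  have : p ^ x.length ≠ 0 := by positivity
  rw [mul_inv_cancel₀ (by positivity)]
  simp [this]
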